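/- Fix d ≥ 1, an input x ∈ ℝ^d, and σ_w, σ_b > 0. Let F = n^{-1/2} · σ_w · Σ_{j=1}^n w_j τ(σ_w⟨w_j^{(0)}, x⟩ + σ_b b_j^{(0)}) + σ_b b, where the w_j, the coordinates w_{j,i}^{(0)} of the vectors w_j^{(0)} ∈ ℝ^d, the b_j^{(0)}, and b are all i.i.d. standard Gaussian random variables, and τ ∈ C²(ℝ) satisfies |τ(x)| ≤ a + b|x|^γ, |τ'(x)| ≤ a + b|x|^γ and |τ''(x)| ≤ a + b|x|^γ for all x ∈ ℝ, for some constants a, b, γ ≥ 0. Set Γ = (σ_w²‖x‖² + σ_b²)^{1/2} and σ² = σ_w² · E[τ²(ΓZ)] + σ_b² with Z ~ N(0,1), and let N ~ N(0, σ²). Then for every n ≥ 1, d_{TV}(F, N) ≤ (1/√n) · (4/σ²) · σ_w² · √(Γ² + Γ⁴·(2 + √(3(1 + 2Γ² + 3Γ⁴)))) · ‖a + b|ΓZ|^γ‖_{L⁴}², where ‖X‖_{L⁴} = (E[X⁴])^{1/4}. -/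

import Mathlib

open MeasureTheory ProbabilityTheory Real

/-- The total variation distance between two distributions:
`sup_B |P(X ∈ B) − P(Y ∈ B)|` over Borel (measurable) sets `B`. -/
noncomputable def dTV {E : Type*} [MeasurableSpace E] (μ ν : Measure E) : ℝ :=
  ⨆ B : {B : Set E // MeasurableSet B}, |(μ B.1).toReal - (ν B.1).toReal|

/-!
Given the hidden preactivations, the output is a centered Gaussian whose variance is `σb²` plus
`σw²` times the empirical mean of `τ²` over the neurons. For centered Gaussians of variances `s ≤ t`
one has `(s / t) • N(0, s) ≤ N(0, t)` as measures, so their total variation distance is at most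
`1 - s / t`. Total variation is convex under mixtures, hence the distance to be bounded is at most
the mean fluctuation of the conditional variance relative to `σ²`, that is
`σw² √(Var τ²(Γ Z) / n) / σ²`. The rotation argument of Maurey and Pisier gives a Gaussian Poincaré
inequality with constant `(π / 2)²`, so that `Var τ²(Γ Z)` is at most `(π Γ)² E[g(Γ Z)⁴]` for any
envelope `g` of `τ` and `τ'`, and `π ≤ 4`.
-/

open scoped ENNReal NNReal

section TotalVariation

variable {E : Type*} [MeasurableSpace E] {μ ν : Measure E}

lemma dTV_le {c : ℝ} (h : ∀ B, MeasurableSet B → |μ.real B - ν.real B| ≤ c) : dTV μ ν ≤ c :=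
  have : Nonempty {B : Set E // MeasurableSet B} := ⟨⟨∅, .empty⟩⟩
  ciSup_le fun B => h B.1 B.2

lemma dTV_comm (μ ν : Measure E) : dTV μ ν = dTV ν μ := by
  simp only [dTV, abs_sub_comm]

variable [IsProbabilityMeasure μ] [IsProbabilityMeasure ν]

lemma abs_measureReal_sub_le_dTV {B : Set E} (hB : MeasurableSet B) :
    |μ.real B - ν.real B| ≤ dTV μ ν := by
  have hbdd : BddAbove (Set.range fun B : {B : Set E // MeasurableSet B} =>
      |μ.real B.1 - ν.real B.1|) := by
    refine ⟨1, Set.forall_mem_range.2 fun B => abs_sub_le_of_nonneg_of_le ?_ ?_ ?_ ?_⟩ <;>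
      first | exact measureReal_nonneg | exact measureReal_le_one
  exact le_ciSup hbdd ⟨B, hB⟩

lemma dTV_le_one_sub_of_smul_le {c : ℝ≥0} (h : c • μ ≤ ν) : dTV μ ν ≤ 1 - c := by
  have hreal (B : Set E) : c * μ.real B ≤ ν.real B := by
    simpa [measureReal_def] using ENNReal.toReal_mono (measure_ne_top ν B) (h B)
  have hc : (c : ℝ) ≤ 1 := by simpa using hreal Set.univ
  have hsub (B : Set E) : μ.real B - ν.real B ≤ 1 - c := by
    nlinarith [hreal B, measureReal_le_one (μ := μ) (s := B)]
  refine dTV_le fun B hB => abs_sub_le_iff.2 ⟨hsub B, ?_⟩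
  linarith [hsub Bᶜ, probReal_compl_eq_one_sub (μ := μ) hB, probReal_compl_eq_one_sub (μ := ν) hB]

end TotalVariation

section Mixture

variable {α E : Type*} [MeasurableSpace α] [MeasurableSpace E] {μ : Measure α} {κ : α → Measure E}

lemma measureReal_bind [∀ a, IsFiniteMeasure (κ a)] (hκ : Measurable κ) {B : Set E}
    (hB : MeasurableSet B) : (μ.bind κ).real B = ∫ a, (κ a).real B ∂μ := by
  rw [measureReal_def, Measure.bind_apply hB hκ.aemeasurable]
  exact (integral_toReal ((Measure.measurable_coe hB).comp hκ).aemeasurable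
    (.of_forall fun a => measure_lt_top _ _)).symm

lemma integrable_measureReal [IsFiniteMeasure μ] [∀ a, IsProbabilityMeasure (κ a)]
    (hκ : Measurable κ) {B : Set E} (hB : MeasurableSet B) :
    Integrable (fun a => (κ a).real B) μ := by
  refine (integrable_const (1 : ℝ)).mono'
    ((Measure.measurable_coe hB).comp hκ).ennreal_toReal.aestronglyMeasurable
    (.of_forall fun a => ?_)
  rw [Real.norm_of_nonneg measureReal_nonneg]
  exact measureReal_le_one

lemma dTV_bind_le [IsProbabilityMeasure μ] [∀ a, IsProbabilityMeasure (κ a)] (hκ : Measurable κ)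
    {ν : Measure E} [IsProbabilityMeasure ν] {f : α → ℝ} (hf : Integrable f μ)
    (h : ∀ a, dTV (κ a) ν ≤ f a) : dTV (μ.bind κ) ν ≤ ∫ a, f a ∂μ := by
  refine dTV_le fun B hB => ?_
  have hint := integrable_measureReal (μ := μ) hκ hB
  calc |(μ.bind κ).real B - ν.real B|
      = |∫ a, ((κ a).real B - ν.real B) ∂μ| := by
        rw [integral_sub hint (integrable_const _), measureReal_bind hκ hB]
        simp
    _ ≤ ∫ a, |(κ a).real B - ν.real B| ∂μ := abs_integral_le_integral_abs
    _ ≤ ∫ a, f a ∂μ := integral_mono (hint.sub (integrable_const _)).abs hf fun a =>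
        (abs_measureReal_sub_le_dTV hB).trans (h a)

lemma map_prod_eq_bind {β : Type*} [MeasurableSpace β] {ν : Measure β} [SFinite ν]
    {G : α × β → E} (hG : Measurable G) :
    (μ.prod ν).map G = μ.bind fun a => ν.map fun b => G (a, b) := by
  have hsection (a : α) : Measurable fun b => G (a, b) := hG.comp measurable_prodMk_left
  have hκ : Measurable fun a => ν.map fun b => G (a, b) := by
    refine Measure.measurable_of_measurable_coe _ fun B hB => ?_
    simp only [Measure.map_apply (hsection _) hB]
    exact measurable_measure_prodMk_left (hG hB)
  ext B hB
  simp only [Measure.map_apply hG hB, Measure.prod_apply (hG hB),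
    Measure.bind_apply hB hκ.aemeasurable, Measure.map_apply (hsection _) hB]
  rfl

end Mixture

section GaussianTotalVariation

lemma div_mul_gaussianPDFReal_le (m : ℝ) {s t : ℝ≥0} (hst : s ≤ t) (x : ℝ) :
    s / t * gaussianPDFReal m s x ≤ gaussianPDFReal m t x := by
  rcases eq_or_ne s 0 with rfl | hs
  · simpa using gaussianPDFReal_nonneg m t x
  have hs : (0 : ℝ) < s := by positivity
  have hst : (s : ℝ) ≤ t := hst
  have ht : (0 : ℝ) < t := hs.trans_le hst
  have hratio : (s : ℝ) / t ≤ √s / √t := by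
    rw [← Real.sqrt_div hs.le]
    have hle : (s : ℝ) / t ≤ 1 := (div_le_one ht).2 hst
    exact Real.le_sqrt_of_sq_le (pow_le_of_le_one (by positivity) hle two_ne_zero)
  have hnormalization : (s : ℝ) / t * (√(2 * π * s))⁻¹ ≤ (√(2 * π * t))⁻¹ := by
    calc (s : ℝ) / t * (√(2 * π * s))⁻¹ ≤ √s / √t * (√(2 * π * s))⁻¹ := by gcongr
      _ = (√(2 * π * t))⁻¹ := by
        rw [Real.sqrt_mul (by positivity) (s : ℝ), Real.sqrt_mul (by positivity) (t : ℝ)]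
        field_simp
  have hexp : rexp (-(x - m) ^ 2 / (2 * s)) ≤ rexp (-(x - m) ^ 2 / (2 * t)) := by
    simp only [neg_div]
    gcongr
  rw [gaussianPDFReal, gaussianPDFReal, ← mul_assoc]
  gcongr

lemma div_smul_gaussianReal_le (m : ℝ) {s t : ℝ≥0} (hst : s ≤ t) :
    (s / t) • gaussianReal m s ≤ gaussianReal m t := by
  rcases eq_or_ne s 0 with rfl | hs
  · simpa using Measure.zero_le _
  have ht : t ≠ 0 := (hs.pos.trans_le hst).ne'
  rw [gaussianReal_of_var_ne_zero m hs, gaussianReal_of_var_ne_zero m ht]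
  change ((s / t : ℝ≥0) : ℝ≥0∞) • volume.withDensity _ ≤ _
  rw [← withDensity_smul _ (measurable_gaussianPDF m s)]
  refine withDensity_mono (.of_forall fun x => ?_)
  rw [Pi.smul_apply, smul_eq_mul, gaussianPDF, gaussianPDF, ← ENNReal.ofReal_coe_nnreal,
    ← ENNReal.ofReal_mul (by positivity)]
  exact ENNReal.ofReal_le_ofReal (div_mul_gaussianPDFReal_le m hst x)

lemma dTV_gaussianReal_le (m : ℝ) (s : ℝ≥0) {t : ℝ≥0} (ht : t ≠ 0) :
    dTV (gaussianReal m s) (gaussianReal m t) ≤ |(s : ℝ) - t| / t := by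
  have ht : (0 : ℝ) < t := by positivity
  rcases le_total s t with hst | hts
  · refine (dTV_le_one_sub_of_smul_le (div_smul_gaussianReal_le m hst)).trans_eq ?_
    rw [NNReal.coe_div, one_sub_div ht.ne', abs_sub_comm,
      abs_of_nonneg (sub_nonneg.2 (NNReal.coe_le_coe.2 hst))]
  · have hts' : (t : ℝ) ≤ s := hts
    have hs : (0 : ℝ) < s := ht.trans_le hts'
    rw [dTV_comm]
    refine (dTV_le_one_sub_of_smul_le (div_smul_gaussianReal_le m hts)).trans ?_
    rw [NNReal.coe_div, one_sub_div hs.ne', abs_of_nonneg (sub_nonneg.2 hts')]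
    gcongr

end GaussianTotalVariation

section Poincare

lemma sq_lintegral_le_measure_univ_mul {α : Type*} [MeasurableSpace α] (μ : Measure α)
    {f : α → ℝ≥0∞} (hf : AEMeasurable f μ) :
    (∫⁻ x, f x ∂μ) ^ 2 ≤ μ Set.univ * ∫⁻ x, f x ^ 2 ∂μ := by
  have hholder := ENNReal.lintegral_mul_le_Lp_mul_Lq μ Real.HolderConjugate.two_two
    (f := fun _ => 1) (g := f) aemeasurable_const hf
  simp only [Pi.mul_apply, one_mul, lintegral_const, ENNReal.rpow_two] at hholder
  refine (pow_le_pow_left' hholder 2).trans_eq ?_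
  rw [mul_pow, ← ENNReal.rpow_mul_natCast, ← ENNReal.rpow_mul_natCast]
  norm_num

lemma evariance_le_lintegral_lintegral_enorm_sub_sq {Ω : Type*} [MeasurableSpace Ω]
    {μ : Measure Ω} [IsProbabilityMeasure μ] {h : Ω → ℝ} (hh : Integrable h μ) :
    eVar[h; μ] ≤ ∫⁻ x, ∫⁻ y, ‖h y - h x‖ₑ ^ 2 ∂μ ∂μ := by
  refine lintegral_mono fun x => ?_
  have hcenter : μ[h] - h x = ∫ y, (h y - h x) ∂μ := by
    rw [integral_sub hh (integrable_const _)]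
    simp
  calc ‖h x - μ[h]‖ₑ ^ 2 = ‖∫ y, (h y - h x) ∂μ‖ₑ ^ 2 := by rw [enorm_sub_rev, hcenter]
    _ ≤ (∫⁻ y, ‖h y - h x‖ₑ ∂μ) ^ 2 := by gcongr; exact enorm_integral_le_lintegral_enorm _
    _ ≤ μ Set.univ * ∫⁻ y, ‖h y - h x‖ₑ ^ 2 ∂μ :=
      sq_lintegral_le_measure_univ_mul μ (hh.1.sub aestronglyMeasurable_const).enorm
    _ = ∫⁻ y, ‖h y - h x‖ₑ ^ 2 ∂μ := by rw [measure_univ, one_mul]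

lemma enorm_sub_sq_le_lintegral_enorm_deriv_sq {F : Type*} [NormedAddCommGroup F]
    [NormedSpace ℝ F] [CompleteSpace F] {f f' : ℝ → F} (hf : ∀ t, HasDerivAt f (f' t) t)
    (hf' : Continuous f') {s t : ℝ} (hst : s ≤ t) :
    ‖f t - f s‖ₑ ^ 2 ≤ ENNReal.ofReal (t - s) * ∫⁻ θ in Set.Ioc s t, ‖f' θ‖ₑ ^ 2 := by
  rw [← intervalIntegral.integral_eq_sub_of_hasDerivAt (fun θ _ => hf θ)
    (hf'.intervalIntegrable s t), intervalIntegral.integral_of_le hst]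
  calc ‖∫ θ in Set.Ioc s t, f' θ‖ₑ ^ 2 ≤ (∫⁻ θ in Set.Ioc s t, ‖f' θ‖ₑ) ^ 2 := by
        gcongr
        exact enorm_integral_le_lintegral_enorm _
    _ ≤ _ := sq_lintegral_le_measure_univ_mul _ hf'.enorm.measurable.aemeasurable
    _ = _ := by rw [Measure.restrict_apply_univ, Real.volume_Ioc]

section Rotation

variable {E : Type*} [NormedAddCommGroup E] [NormedSpace ℝ E] {h : E → ℝ}

lemma enorm_sub_sq_le_lintegral_enorm_fderiv_rotation_sq (hh : ContDiff ℝ 1 h) (p : E × E) :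
    ‖h p.2 - h p.1‖ₑ ^ 2 ≤ ENNReal.ofReal (π / 2) * ∫⁻ θ in Set.Ioc 0 (π / 2),
      ‖fderiv ℝ h (cos θ • p.1 + sin θ • p.2) (-sin θ • p.1 + cos θ • p.2)‖ₑ ^ 2 := by
  have hderiv (θ : ℝ) : HasDerivAt (fun θ => h (cos θ • p.1 + sin θ • p.2))
      (fderiv ℝ h (cos θ • p.1 + sin θ • p.2) (-sin θ • p.1 + cos θ • p.2)) θ :=
    (hh.differentiable one_ne_zero _).hasFDerivAt.comp_hasDerivAt θ
      (((hasDerivAt_cos θ).smul_const p.1).add ((hasDerivAt_sin θ).smul_const p.2))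
  have hcont : Continuous fun θ : ℝ =>
      fderiv ℝ h (cos θ • p.1 + sin θ • p.2) (-sin θ • p.1 + cos θ • p.2) :=
    ((hh.continuous_fderiv one_ne_zero).comp (by fun_prop)).clm_apply (by fun_prop)
  simpa using enorm_sub_sq_le_lintegral_enorm_deriv_sq hderiv hcont (s := 0) (t := π / 2)
    (by positivity)

variable [CompleteSpace E] [SecondCountableTopology E] [MeasurableSpace E] [BorelSpace E]
  {μ : Measure E} [IsGaussian μ]

lemma lintegral_rotation (hμ : μ[id] = 0) (θ : ℝ) {f : E × E → ℝ≥0∞} (hf : Measurable f) :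
    ∫⁻ p, f (cos θ • p.1 + sin θ • p.2, -sin θ • p.1 + cos θ • p.2) ∂(μ.prod μ) =
      ∫⁻ p, f p ∂(μ.prod μ) := by
  conv_rhs => rw [← IsGaussian.map_rotation_eq_self hμ θ, lintegral_map hf (by fun_prop)]
  simp only [ContinuousLinearMap.rotation_apply]

lemma lintegral_setLIntegral_rotation (hμ : μ[id] = 0) (s : Set ℝ) {f : E × E → ℝ≥0∞}
    (hf : Measurable f) :
    ∫⁻ p, (∫⁻ θ in s, f (cos θ • p.1 + sin θ • p.2, -sin θ • p.1 + cos θ • p.2)) ∂(μ.prod μ) =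
      (∫⁻ p, f p ∂(μ.prod μ)) * volume s := by
  have hrotation : Measurable fun q : (E × E) × ℝ =>
      (cos q.2 • q.1.1 + sin q.2 • q.1.2, -sin q.2 • q.1.1 + cos q.2 • q.1.2) :=
    Continuous.measurable (by fun_prop)
  rw [lintegral_lintegral_swap (f := fun (p : E × E) θ =>
    f (cos θ • p.1 + sin θ • p.2, -sin θ • p.1 + cos θ • p.2)) (hf.comp hrotation).aemeasurable]
  simp only [lintegral_rotation hμ _ hf, setLIntegral_const]

/- Maurey and Pisier: integrate along the quarter circle from `x` to `y`; at each angle, position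
and velocity are again a pair of independent copies of `μ`. -/
lemma evariance_le_lintegral_enorm_fderiv_sq (hμ : μ[id] = 0) (hh : ContDiff ℝ 1 h)
    (hint : Integrable h μ) :
    eVar[h; μ] ≤ ENNReal.ofReal (π / 2) ^ 2 *
      ∫⁻ p, ‖fderiv ℝ h p.1 p.2‖ₑ ^ 2 ∂(μ.prod μ) := by
  have hsub : Measurable fun p : E × E => ‖h p.2 - h p.1‖ₑ ^ 2 :=
    ((hh.continuous.comp continuous_snd).sub
      (hh.continuous.comp continuous_fst)).measurable.enorm.pow_const 2
  have hfderiv : Measurable fun p : E × E => ‖fderiv ℝ h p.1 p.2‖ₑ ^ 2 :=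
    (((hh.continuous_fderiv one_ne_zero).comp continuous_fst).clm_apply
      continuous_snd).measurable.enorm.pow_const 2
  calc eVar[h; μ] ≤ ∫⁻ x, ∫⁻ y, ‖h y - h x‖ₑ ^ 2 ∂μ ∂μ :=
        evariance_le_lintegral_lintegral_enorm_sub_sq hint
    _ = ∫⁻ p, ‖h p.2 - h p.1‖ₑ ^ 2 ∂(μ.prod μ) := (lintegral_prod _ hsub.aemeasurable).symm
    _ ≤ ∫⁻ p, ENNReal.ofReal (π / 2) * (∫⁻ θ in Set.Ioc 0 (π / 2),
          ‖fderiv ℝ h (cos θ • p.1 + sin θ • p.2) (-sin θ • p.1 + cos θ • p.2)‖ₑ ^ 2)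
          ∂(μ.prod μ) :=
        lintegral_mono fun p => enorm_sub_sq_le_lintegral_enorm_fderiv_rotation_sq hh p
    _ = ENNReal.ofReal (π / 2) ^ 2 * ∫⁻ p, ‖fderiv ℝ h p.1 p.2‖ₑ ^ 2 ∂(μ.prod μ) := by
        rw [lintegral_const_mul' _ _ ENNReal.ofReal_ne_top,
          lintegral_setLIntegral_rotation hμ _ hfderiv, Real.volume_Ioc, sub_zero]
        ring

end Rotation

lemma evariance_gaussianReal_le {v : ℝ≥0} {h : ℝ → ℝ} (hh : ContDiff ℝ 1 h)
    (hint : Integrable h (gaussianReal 0 v)) :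
    eVar[h; gaussianReal 0 v] ≤
      ENNReal.ofReal (π / 2) ^ 2 * v * ∫⁻ y, ‖deriv h y‖ₑ ^ 2 ∂gaussianReal 0 v := by
  have hderiv : Continuous (deriv h) := hh.continuous_deriv_one
  have hsecond : ∫⁻ y : ℝ, ‖y‖ₑ ^ 2 ∂gaussianReal 0 v = v := by
    have hvar := ofReal_variance (memLp_id_gaussianReal (μ := 0) (v := v) 2)
    simpa [variance_id_gaussianReal, evariance] using hvar.symm
  have hprod : ∫⁻ p, ‖fderiv ℝ h p.1 p.2‖ₑ ^ 2 ∂((gaussianReal 0 v).prod (gaussianReal 0 v)) =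
      (∫⁻ y, ‖deriv h y‖ₑ ^ 2 ∂gaussianReal 0 v) * v := by
    simp only [fderiv_eq_deriv_mul, enorm_mul, mul_pow]
    rw [lintegral_prod_mul (f := fun y => ‖deriv h y‖ₑ ^ 2) (g := fun y => ‖y‖ₑ ^ 2)
      (hderiv.measurable.enorm.pow_const 2).aemeasurable (by fun_prop), hsecond]
  refine (evariance_le_lintegral_enorm_fderiv_sq (by simp) hh hint).trans_eq ?_
  rw [hprod]
  ring

lemma variance_gaussianReal_le {v : ℝ≥0} {h : ℝ → ℝ} (hh : ContDiff ℝ 1 h)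
    (hint : MemLp h 2 (gaussianReal 0 v)) (hderiv : MemLp (deriv h) 2 (gaussianReal 0 v)) :
    Var[h; gaussianReal 0 v] ≤ (π / 2) ^ 2 * v * ∫ y, deriv h y ^ 2 ∂gaussianReal 0 v := by
  have hsq (y : ℝ) : ‖deriv h y‖ₑ ^ 2 = ENNReal.ofReal (deriv h y ^ 2) := by
    rw [← ofReal_norm, ← ENNReal.ofReal_pow (norm_nonneg _), Real.norm_eq_abs, sq_abs]
  have hle := evariance_gaussianReal_le hh (hint.integrable one_le_two)
  simp only [hsq] at hle
  rw [← ofReal_variance hint, ← ofReal_integral_eq_lintegral_ofReal hderiv.integrable_sq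
      (.of_forall fun y => sq_nonneg _), ← ENNReal.ofReal_pow (by positivity),
    ← ENNReal.ofReal_coe_nnreal, ← ENNReal.ofReal_mul (by positivity),
    ← ENNReal.ofReal_mul (by positivity)] at hle
  exact (ENNReal.ofReal_le_ofReal_iff (by positivity)).1 hle

lemma memLp_two_mul {Ω : Type*} [MeasurableSpace Ω] {μ : Measure Ω} {f g : Ω → ℝ}
    (hf : MemLp f 4 μ) (hg : MemLp g 4 μ) : MemLp (fun y => f y * g y) 2 μ := by
  have : ENNReal.HolderTriple 4 4 2 := ⟨by
    rw [← ENNReal.toReal_eq_toReal_iff' (by simp) (by simp)]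
    norm_num [ENNReal.toReal_add]⟩
  exact hg.mul' hf

lemma variance_sq_gaussianReal_le {v : ℝ≥0} {f g : ℝ → ℝ} (hf : ContDiff ℝ 1 f)
    (hg : MemLp g 4 (gaussianReal 0 v)) (hfg : ∀ y, |f y| ≤ g y)
    (hf'g : ∀ y, |deriv f y| ≤ g y) :
    Var[fun y => f y ^ 2; gaussianReal 0 v] ≤ π ^ 2 * v * ∫ y, g y ^ 4 ∂gaussianReal 0 v := by
  have hfcont : Continuous f := hf.continuous
  have hf'cont : Continuous (deriv f) := hf.continuous_deriv_one
  have hderiv : deriv (fun y => f y ^ 2) = fun y => 2 * (f y * deriv f y) := by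
    ext y
    rw [deriv_fun_pow (hf.differentiable one_ne_zero y)]
    ring
  have hmem : MemLp f 4 (gaussianReal 0 v) := hg.mono' hfcont.aestronglyMeasurable (.of_forall hfg)
  have hmem' : MemLp (deriv f) 4 (gaussianReal 0 v) :=
    hg.mono' hf'cont.aestronglyMeasurable (.of_forall hf'g)
  have hmul : MemLp (fun y => 2 * (f y * deriv f y)) 2 (gaussianReal 0 v) :=
    (memLp_two_mul hmem hmem').const_mul 2
  have hsq : MemLp (fun y => f y ^ 2) 2 (gaussianReal 0 v) := by
    simpa only [sq] using memLp_two_mul hmem hmem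
  have hg4 : Integrable (fun y => g y ^ 4) (gaussianReal 0 v) := by
    refine (memLp_two_mul hg hg).integrable_sq.congr (.of_forall fun y => ?_)
    ring
  have hpointwise (y : ℝ) : (2 * (f y * deriv f y)) ^ 2 ≤ 4 * g y ^ 4 := by
    calc (2 * (f y * deriv f y)) ^ 2 = 4 * (|f y| ^ 2 * |deriv f y| ^ 2) := by
          rw [sq_abs, sq_abs]; ring
      _ ≤ 4 * (g y ^ 2 * g y ^ 2) := by gcongr <;> apply_assumption
      _ = 4 * g y ^ 4 := by ring
  calc Var[fun y => f y ^ 2; gaussianReal 0 v]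
      ≤ (π / 2) ^ 2 * v * ∫ y, (2 * (f y * deriv f y)) ^ 2 ∂gaussianReal 0 v := by
        simpa only [hderiv] using variance_gaussianReal_le (hf.pow 2) hsq (hderiv ▸ hmul)
    _ ≤ (π / 2) ^ 2 * v * ∫ y, 4 * g y ^ 4 ∂gaussianReal 0 v := by
        exact mul_le_mul_of_nonneg_left
          (integral_mono hmul.integrable_sq (hg4.const_mul 4) hpointwise) (by positivity)
    _ = π ^ 2 * v * ∫ y, g y ^ 4 ∂gaussianReal 0 v := by
        rw [integral_const_mul]
        ring

end Poincare

section EmpiricalMean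

lemma integral_abs_sub_integral_le_sqrt_variance {Ω : Type*} [MeasurableSpace Ω] {μ : Measure Ω}
    [IsProbabilityMeasure μ] {X : Ω → ℝ} (hX : MemLp X 2 μ) :
    ∫ ω, |X ω - μ[X]| ∂μ ≤ √Var[X; μ] := by
  have hdev : MemLp (fun ω => |X ω - μ[X]|) 2 μ := (hX.sub (memLp_const _)).norm
  have hnonneg := variance_nonneg (fun ω => |X ω - μ[X]|) μ
  rw [variance_eq_sub hdev] at hnonneg
  simp only [Pi.pow_apply, sq_abs] at hnonneg
  rw [variance_eq_integral hX.aestronglyMeasurable.aemeasurable]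
  exact Real.le_sqrt_of_sq_le (sub_nonneg.1 hnonneg)

variable {ι Ω : Type*} [Fintype ι] [MeasurableSpace Ω] {ν : Measure Ω} [IsProbabilityMeasure ν]
  {f : Ω → ℝ}

lemma memLp_sum_eval {p : ℝ≥0∞} (hf : MemLp f p ν) :
    MemLp (fun y : ι → Ω => ∑ i, f (y i)) p (Measure.pi fun _ => ν) :=
  memLp_finsetSum _ fun i _ => hf.comp_measurePreserving (measurePreserving_eval (fun _ => ν) i)

lemma integral_sum_eval (hf : Integrable f ν) :
    ∫ y : ι → Ω, ∑ i, f (y i) ∂(Measure.pi fun _ => ν) = Fintype.card ι * ∫ x, f x ∂ν := by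
  have hint (i : ι) : Integrable (fun y : ι → Ω => f (y i)) (Measure.pi fun _ => ν) :=
    (measurePreserving_eval (fun _ => ν) i).integrable_comp_of_integrable hf
  rw [integral_finsetSum _ fun i _ => hint i]
  simp [integral_comp_eval (μ := fun _ : ι => ν) hf.aestronglyMeasurable]

lemma variance_sum_eval (hf : MemLp f 2 ν) :
    Var[fun y : ι → Ω => ∑ i, f (y i); Measure.pi fun _ => ν] =
      Fintype.card ι * Var[f; ν] := by
  have hsum := variance_sum_pi (μ := fun _ : ι => ν) (X := fun _ => f) fun _ => hf
  simpa [Finset.sum_fn] using hsum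

lemma integral_abs_average_sub_integral_le [Nonempty ι] (hf : MemLp f 2 ν) :
    ∫ y : ι → Ω, |(∑ i, f (y i)) / Fintype.card ι - ∫ x, f x ∂ν| ∂(Measure.pi fun _ => ν) ≤
      √(Var[f; ν] / Fintype.card ι) := by
  have hcard : (Fintype.card ι : ℝ) ≠ 0 := by positivity
  have hmem : MemLp (fun y : ι → Ω => (∑ i, f (y i)) / Fintype.card ι) 2
      (Measure.pi fun _ => ν) := by
    simpa only [div_eq_inv_mul] using (memLp_sum_eval hf).const_mul _
  have hmean : ∫ y : ι → Ω, (∑ i, f (y i)) / Fintype.card ι ∂(Measure.pi fun _ => ν) =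
      ∫ x, f x ∂ν := by
    rw [integral_div, integral_sum_eval (hf.integrable one_le_two), mul_div_cancel_left₀ _ hcard]
  have hvar : Var[fun y : ι → Ω => (∑ i, f (y i)) / Fintype.card ι; Measure.pi fun _ => ν] =
      Var[f; ν] / Fintype.card ι := by
    simp only [div_eq_inv_mul]
    rw [variance_const_mul, variance_sum_eval hf]
    field_simp
  simpa only [hmean, hvar] using integral_abs_sub_integral_le_sqrt_variance hmem

end EmpiricalMean

section GaussianLinearCombination

lemma measurePreserving_const_mul_gaussianReal (c m : ℝ) (v : ℝ≥0) :
    MeasurePreserving (fun z => c * z) (gaussianReal m v)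
      (gaussianReal (c * m) (‖c‖₊ ^ 2 * v)) := by
  refine ⟨by fun_prop, ?_⟩
  rw [gaussianReal_map_const_mul]
  congr 2
  ext
  simp

lemma integral_comp_const_mul_gaussianReal (c m : ℝ) (v : ℝ≥0) {f : ℝ → ℝ}
    (hf : AEStronglyMeasurable f (gaussianReal (c * m) (‖c‖₊ ^ 2 * v))) :
    ∫ z, f (c * z) ∂gaussianReal m v = ∫ y, f y ∂gaussianReal (c * m) (‖c‖₊ ^ 2 * v) := by
  rw [← (measurePreserving_const_mul_gaussianReal c m v).map_eq] at hf ⊢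
  exact (integral_map (by fun_prop) hf).symm

lemma measurePreserving_add_gaussianReal (m₁ m₂ : ℝ) (v₁ v₂ : ℝ≥0) :
    MeasurePreserving (fun p : ℝ × ℝ => p.1 + p.2)
      ((gaussianReal m₁ v₁).prod (gaussianReal m₂ v₂)) (gaussianReal (m₁ + m₂) (v₁ + v₂)) :=
  ⟨by fun_prop, gaussianReal_conv_gaussianReal⟩

variable {ι : Type*} [Fintype ι]

lemma measurePreserving_sum_pi_gaussianReal (m : ι → ℝ) (v : ι → ℝ≥0) :
    MeasurePreserving (fun y : ι → ℝ => ∑ i, y i) (Measure.pi fun i => gaussianReal (m i) (v i))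
      (gaussianReal (∑ i, m i) (∑ i, v i)) := by
  refine ⟨by fun_prop, Measure.ext_of_charFun ?_⟩
  rw [charFun_map_sum_pi_eq_prod]
  ext t
  simp only [Finset.prod_apply, charFun_gaussianReal, ← Complex.exp_sum]
  congr 1
  push_cast
  simp only [Finset.sum_sub_distrib, Finset.mul_sum, Finset.sum_mul, Finset.sum_div]

lemma measurePreserving_sum_const_mul_gaussianReal (c m : ι → ℝ) (v : ι → ℝ≥0) :
    MeasurePreserving (fun y : ι → ℝ => ∑ i, c i * y i)
      (Measure.pi fun i => gaussianReal (m i) (v i))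
      (gaussianReal (∑ i, c i * m i) (∑ i, ‖c i‖₊ ^ 2 * v i)) :=
  (measurePreserving_sum_pi_gaussianReal _ _).comp
    (measurePreserving_pi _ _ fun i => measurePreserving_const_mul_gaussianReal (c i) (m i) (v i))

lemma measurePreserving_sum_const_mul_add_const_mul_gaussianReal (c m : ι → ℝ) (v : ι → ℝ≥0)
    (s m' : ℝ) (v' : ℝ≥0) :
    MeasurePreserving (fun p : (ι → ℝ) × ℝ => ∑ i, c i * p.1 i + s * p.2)
      ((Measure.pi fun i => gaussianReal (m i) (v i)).prod (gaussianReal m' v'))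
      (gaussianReal (∑ i, c i * m i + s * m') (∑ i, ‖c i‖₊ ^ 2 * v i + ‖s‖₊ ^ 2 * v')) :=
  (measurePreserving_add_gaussianReal _ _ _ _).comp
    ((measurePreserving_sum_const_mul_gaussianReal c m v).prod
      (measurePreserving_const_mul_gaussianReal s m' v'))

end GaussianLinearCombination

section Network

/-- The variance `σw² ‖x‖² + σb²` of a hidden preactivation with standard Gaussian parameters. -/
noncomputable def preactivationVariance {κ : Type*} [Fintype κ] (x : κ → ℝ) (σw σb : ℝ) : ℝ≥0 :=
  ‖σw‖₊ ^ 2 * ∑ i, ‖x i‖₊ ^ 2 + ‖σb‖₊ ^ 2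

/-- The conditional variance of the network output given the hidden preactivations `y`. -/
noncomputable def outputVariance {ι : Type*} [Fintype ι] (σw σb : ℝ) (τ : ℝ → ℝ) (y : ι → ℝ) :
    ℝ≥0 :=
  ‖σw‖₊ ^ 2 * ((∑ j, ‖τ (y j)‖₊ ^ 2) / Fintype.card ι) + ‖σb‖₊ ^ 2

/-- The distribution of the output, at the input `x`, of the shallow network of width `n` whose
parameters are independent standard Gaussians. A sample point lists the output weights, the hidden
weights, the hidden biases and the output bias, in this order. -/
noncomputable def networkLaw {d : ℕ} (n : ℕ) (x : Fin d → ℝ) (σw σb : ℝ) (τ : ℝ → ℝ) : Measure ℝ :=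
  Measure.map
    (fun ω : (Fin n → ℝ) × (Fin n → (Fin d → ℝ)) × (Fin n → ℝ) × ℝ =>
      (√n)⁻¹ * σw * (∑ j, ω.1 j * τ (σw * (∑ i, ω.2.1 j i * x i) + σb * ω.2.2.1 j))
        + σb * ω.2.2.2)
    ((Measure.pi fun _ : Fin n => gaussianReal 0 1).prod
      ((Measure.pi fun _ : Fin n => Measure.pi fun _ : Fin d => gaussianReal 0 1).prod
        ((Measure.pi fun _ : Fin n => gaussianReal 0 1).prod (gaussianReal 0 1))))

lemma coe_preactivationVariance {κ : Type*} [Fintype κ] (x : κ → ℝ) (σw σb : ℝ) :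
    (preactivationVariance x σw σb : ℝ) = σw ^ 2 * ∑ i, x i ^ 2 + σb ^ 2 := by
  simp [preactivationVariance]

lemma preactivationVariance_eq_nnnorm_sq {κ : Type*} [Fintype κ] {x : κ → ℝ} {σw σb Γ : ℝ}
    (hΓ : Γ = √(σw ^ 2 * ∑ i, x i ^ 2 + σb ^ 2)) : preactivationVariance x σw σb = ‖Γ‖₊ ^ 2 := by
  ext
  rw [coe_preactivationVariance, NNReal.coe_pow, coe_nnnorm, Real.norm_eq_abs, sq_abs, hΓ,
    Real.sq_sqrt (by positivity)]

section

variable {ι : Type*} [Fintype ι]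

lemma coe_outputVariance (σw σb : ℝ) (τ : ℝ → ℝ) (y : ι → ℝ) :
    (outputVariance σw σb τ y : ℝ) =
      σw ^ 2 * ((∑ j, τ (y j) ^ 2) / Fintype.card ι) + σb ^ 2 := by
  simp [outputVariance]

lemma measurable_gaussianReal_outputVariance (σw σb : ℝ) {τ : ℝ → ℝ} (hτ : Measurable τ) :
    Measurable fun y : ι → ℝ => gaussianReal 0 (outputVariance σw σb τ y) := by
  have hvar : Measurable fun y : ι → ℝ => ((0 : ℝ), outputVariance σw σb τ y) := by
    unfold outputVariance
    fun_prop
  exact measurable_gaussianReal.comp hvar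

lemma integral_abs_outputVariance_sub_le [Nonempty ι] (σw σb : ℝ) {τ : ℝ → ℝ} {ν : Measure ℝ}
    [IsProbabilityMeasure ν] (hτ : MemLp (fun y => τ y ^ 2) 2 ν) :
    ∫ y : ι → ℝ, |(outputVariance σw σb τ y : ℝ) - (σw ^ 2 * ∫ z, τ z ^ 2 ∂ν + σb ^ 2)|
        ∂(Measure.pi fun _ => ν) ≤
      σw ^ 2 * √(Var[fun y => τ y ^ 2; ν] / Fintype.card ι) := by
  simp only [coe_outputVariance, add_sub_add_right_eq_sub, ← mul_sub, abs_mul, abs_sq]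
  rw [integral_const_mul]
  gcongr
  exact integral_abs_average_sub_integral_le hτ

lemma integrable_abs_outputVariance_sub (σw σb s : ℝ) {τ : ℝ → ℝ} {ν : Measure ℝ}
    [IsProbabilityMeasure ν] (hτ : Integrable (fun y => τ y ^ 2) ν) :
    Integrable (fun y : ι → ℝ => |(outputVariance σw σb τ y : ℝ) - s|)
      (Measure.pi fun _ => ν) := by
  have hsum : Integrable (fun y : ι → ℝ => ∑ j, τ (y j) ^ 2) (Measure.pi fun _ => ν) :=
    memLp_one_iff_integrable.1 (memLp_sum_eval (memLp_one_iff_integrable.2 hτ))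
  simp only [coe_outputVariance]
  exact ((((hsum.div_const _).const_mul _).add (integrable_const _)).sub (integrable_const _)).abs

lemma measurePreserving_preactivation {κ : Type*} [Fintype κ] (x : κ → ℝ) (σw σb : ℝ) :
    MeasurePreserving
      (fun (h : (ι → κ → ℝ) × (ι → ℝ)) j => σw * (∑ i, h.1 j i * x i) + σb * h.2 j)
      ((Measure.pi fun _ => Measure.pi fun _ => gaussianReal 0 1).prod
        (Measure.pi fun _ => gaussianReal 0 1))
      (Measure.pi fun _ => gaussianReal 0 (preactivationVariance x σw σb)) := by
  have hneuron : MeasurePreserving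
      (fun p : (κ → ℝ) × ℝ => σw * (∑ i, p.1 i * x i) + σb * p.2)
      ((Measure.pi fun _ => gaussianReal 0 1).prod (gaussianReal 0 1))
      (gaussianReal 0 (preactivationVariance x σw σb)) := by
    have haffine := measurePreserving_sum_const_mul_add_const_mul_gaussianReal
      (fun i => σw * x i) 0 1 σb 0 1
    simpa [preactivationVariance, Finset.mul_sum, mul_pow, mul_assoc, mul_comm (x _)] using haffine
  have hlayer := measurePreserving_pi (fun _ : ι =>
    (Measure.pi fun _ : κ => gaussianReal 0 1).prod (gaussianReal 0 1)) _ fun _ => hneuron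
  have hunzip := measurePreserving_arrowProdEquivProdArrow (κ → ℝ) ℝ ι
    (fun _ => Measure.pi fun _ => gaussianReal 0 1) (fun _ => gaussianReal 0 1)
  exact hlayer.comp hunzip.symm

end

lemma measurePreserving_prod_rotate_inner {α β γ δ : Type*} [MeasurableSpace α] [MeasurableSpace β]
    [MeasurableSpace γ] [MeasurableSpace δ] (μ₁ : Measure α) (μ₂ : Measure β) (μ₃ : Measure γ)
    (μ₄ : Measure δ) [SFinite μ₁] [SFinite μ₂] [SFinite μ₃] [SFinite μ₄] :
    MeasurePreserving (fun ω : α × β × γ × δ => ((ω.2.1, ω.2.2.1), (ω.1, ω.2.2.2)))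
      (μ₁.prod (μ₂.prod (μ₃.prod μ₄))) ((μ₂.prod μ₃).prod (μ₁.prod μ₄)) := by
  have hgroup := (MeasurePreserving.id μ₁).prod (measurePreserving_prodAssoc μ₂ μ₃ μ₄).symm
  have hsplit := (measurePreserving_prodAssoc μ₁ (μ₂.prod μ₃) μ₄).symm
  have hswap := (Measure.measurePreserving_swap (μ := μ₁) (ν := μ₂.prod μ₃)).prod
    (MeasurePreserving.id μ₄)
  exact (measurePreserving_prodAssoc (μ₂.prod μ₃) μ₁ μ₄).comp (hswap.comp (hsplit.comp hgroup))

variable {d n : ℕ}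

lemma networkLaw_eq_bind (x : Fin d → ℝ) (σw σb : ℝ) {τ : ℝ → ℝ} (hτ : Measurable τ) :
    networkLaw n x σw σb τ =
      (Measure.pi fun _ : Fin n => gaussianReal 0 (preactivationVariance x σw σb)).bind
        fun y => gaussianReal 0 (outputVariance σw σb τ y) := by
  let output (p : (Fin n → ℝ) × (Fin n → ℝ) × ℝ) : ℝ :=
    ∑ j, (√n)⁻¹ * σw * τ (p.1 j) * p.2.1 j + σb * p.2.2
  have houtput : Measurable output := by fun_prop
  have hreorder := measurePreserving_prod_rotate_inner
    (Measure.pi fun _ : Fin n => gaussianReal 0 1)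
    (Measure.pi fun _ : Fin n => Measure.pi fun _ : Fin d => gaussianReal 0 1)
    (Measure.pi fun _ : Fin n => gaussianReal 0 1) (gaussianReal 0 1)
  have hhidden := ((measurePreserving_preactivation (ι := Fin n) x σw σb).prod
    (MeasurePreserving.id _)).comp hreorder
  have hconditional (y : Fin n → ℝ) :
      ((Measure.pi fun _ => gaussianReal 0 1).prod (gaussianReal 0 1)).map
        (fun q => output (y, q)) = gaussianReal 0 (outputVariance σw σb τ y) := by
    have haffine := (measurePreserving_sum_const_mul_add_const_mul_gaussianReal
      (fun j => (√n)⁻¹ * σw * τ (y j)) 0 1 σb 0 1).map_eq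
    have hvar : ∑ j, ‖(√n)⁻¹ * σw * τ (y j)‖₊ ^ 2 + ‖σb‖₊ ^ 2 = outputVariance σw σb τ y := by
      ext
      simp [coe_outputVariance, mul_pow, ← Finset.mul_sum]
      ring
    simpa [← hvar] using haffine
  calc networkLaw n x σw σb τ
      = ((Measure.pi fun _ : Fin n => gaussianReal 0 (preactivationVariance x σw σb)).prod
          ((Measure.pi fun _ => gaussianReal 0 1).prod (gaussianReal 0 1))).map output := by
        rw [← hhidden.map_eq, Measure.map_map houtput hhidden.measurable, networkLaw]
        congr with ω
        simp [output, Finset.mul_sum, mul_assoc, mul_comm (ω.1 _)]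
    _ = _ := by simp only [map_prod_eq_bind houtput, hconditional]

lemma dTV_networkLaw_le (x : Fin d → ℝ) (σw σb : ℝ) {v : ℝ≥0}
    (hv : v = preactivationVariance x σw σb) {τ : ℝ → ℝ} (hτ : Measurable τ)
    (hτ2 : MemLp (fun y => τ y ^ 2) 2 (gaussianReal 0 v)) (hn : n ≠ 0) {s : ℝ≥0} (hs : s ≠ 0)
    (hsτ : (s : ℝ) = σw ^ 2 * ∫ y, τ y ^ 2 ∂gaussianReal 0 v + σb ^ 2) :
    dTV (networkLaw n x σw σb τ) (gaussianReal 0 s) ≤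
      σw ^ 2 / s * √(Var[fun y => τ y ^ 2; gaussianReal 0 v] / n) := by
  have : NeZero n := ⟨hn⟩
  have hL1 := integral_abs_outputVariance_sub_le (ι := Fin n) σw σb hτ2
  rw [← hsτ, Fintype.card_fin] at hL1
  have hint := (integrable_abs_outputVariance_sub (ι := Fin n) σw σb s
    (hτ2.integrable one_le_two)).div_const (s : ℝ)
  rw [networkLaw_eq_bind x σw σb hτ, ← hv]
  refine (dTV_bind_le (measurable_gaussianReal_outputVariance σw σb hτ) hint
    fun y => dTV_gaussianReal_le 0 _ hs).trans ?_
  rw [integral_div, div_mul_eq_mul_div]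
  gcongr

end Network

lemma memLp_const_add_const_mul_abs_rpow_gaussianReal (a b : ℝ) {γ : ℝ} (hγ : 0 ≤ γ) (m : ℝ)
    (v p : ℝ≥0) : MemLp (fun y => a + b * |y| ^ γ) p (gaussianReal m v) := by
  have hpow : MemLp (fun y : ℝ => |y| ^ γ) p (gaussianReal m v) := by
    rcases hγ.eq_or_lt with rfl | hγ
    · simpa using memLp_const (1 : ℝ)
    lift γ to ℝ≥0 using hγ.le
    have hγ : (γ : ℝ≥0∞) ≠ 0 := by exact_mod_cast hγ.ne'
    have hid := (memLp_id_gaussianReal (μ := m) (v := v) (p * γ)).norm_rpow_div γ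
    rwa [ENNReal.coe_mul, ENNReal.mul_div_cancel_right hγ ENNReal.coe_ne_top] at hid
  exact (memLp_const a).add (hpow.const_mul b)

theorem gaussian_nn_tv_bound_general
    {d : ℕ} (x : Fin d → ℝ) (σw σb : ℝ) {τ g : ℝ → ℝ} (hτ : ContDiff ℝ 1 τ)
    (hg : MemLp g 4 (gaussianReal 0 (preactivationVariance x σw σb)))
    (hτ0 : ∀ y, |τ y| ≤ g y) (hτ1 : ∀ y, |deriv τ y| ≤ g y)
    {Γ : ℝ} (hΓ : Γ = √(σw ^ 2 * ∑ i, x i ^ 2 + σb ^ 2))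
    {σ2 : ℝ} (hσ2 : σ2 = σw ^ 2 * ∫ z, τ (Γ * z) ^ 2 ∂gaussianReal 0 1 + σb ^ 2)
    (hσ2_pos : 0 < σ2) {n : ℕ} (hn : n ≠ 0) :
    dTV (networkLaw n x σw σb τ) (gaussianReal 0 σ2.toNNReal) ≤
      (√n)⁻¹ * (π / σ2) * σw ^ 2 * Γ *
        ((∫ z, g (Γ * z) ^ 4 ∂gaussianReal 0 1) ^ ((1 : ℝ) / 4)) ^ 2 := by
  have hΓ_nonneg : 0 ≤ Γ := hΓ ▸ Real.sqrt_nonneg _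
  have hv := preactivationVariance_eq_nnnorm_sq hΓ
  rw [hv] at hg
  have hτ_sq : MemLp (fun y => τ y ^ 2) 2 (gaussianReal 0 (‖Γ‖₊ ^ 2)) := by
    have hτ_mem := hg.mono' hτ.continuous.aestronglyMeasurable (.of_forall hτ0)
    simpa only [sq] using memLp_two_mul hτ_mem hτ_mem
  have hscale {f : ℝ → ℝ} (hf : AEStronglyMeasurable f (gaussianReal 0 (‖Γ‖₊ ^ 2))) :
      ∫ z, f (Γ * z) ∂gaussianReal 0 1 = ∫ y, f y ∂gaussianReal 0 (‖Γ‖₊ ^ 2) := by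
    simpa using integral_comp_const_mul_gaussianReal Γ 0 1 (by simpa using hf)
  have hσ2_eq : (σ2.toNNReal : ℝ) =
      σw ^ 2 * ∫ y, τ y ^ 2 ∂gaussianReal 0 (‖Γ‖₊ ^ 2) + σb ^ 2 := by
    rw [Real.coe_toNNReal _ hσ2_pos.le, hσ2, hscale hτ_sq.1]
  have hM : ∫ z, g (Γ * z) ^ 4 ∂gaussianReal 0 1 = ∫ y, g y ^ 4 ∂gaussianReal 0 (‖Γ‖₊ ^ 2) :=
    hscale (hg.1.pow 4)
  set M := ∫ z, g (Γ * z) ^ 4 ∂gaussianReal 0 1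
  have hM_nonneg : 0 ≤ M := integral_nonneg fun z => by positivity
  have hM_rpow : (M ^ ((1 : ℝ) / 4)) ^ 2 = √M := by
    rw [← Real.rpow_mul_natCast hM_nonneg, Real.sqrt_eq_rpow]
    norm_num
  calc dTV (networkLaw n x σw σb τ) (gaussianReal 0 σ2.toNNReal)
      ≤ σw ^ 2 / σ2.toNNReal * √(Var[fun y => τ y ^ 2; gaussianReal 0 (‖Γ‖₊ ^ 2)] / n) :=
        dTV_networkLaw_le x σw σb hv.symm hτ.continuous.measurable hτ_sq hn
          (Real.toNNReal_pos.2 hσ2_pos).ne' hσ2_eq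
    _ ≤ σw ^ 2 / σ2 * √((π * Γ) ^ 2 * M / n) := by
        rw [Real.coe_toNNReal _ hσ2_pos.le]
        gcongr
        simpa [hM, mul_pow] using variance_sq_gaussianReal_le hτ hg hτ0 hτ1
    _ = (√n)⁻¹ * (π / σ2) * σw ^ 2 * Γ * (M ^ ((1 : ℝ) / 4)) ^ 2 := by
        rw [hM_rpow, Real.sqrt_div (by positivity), Real.sqrt_mul (by positivity),
          Real.sqrt_sq (by positivity)]
        ring

theorem gaussian_nn_tv_bound
    (d : ℕ) (hd : 1 ≤ d) (x : Fin d → ℝ) (σw σb : ℝ) (hσw : 0 < σw) (hσb : 0 < σb)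
    (τ : ℝ → ℝ) (a b γ : ℝ) (ha : 0 ≤ a) (hb : 0 ≤ b) (hγ : 0 ≤ γ)
    (hτ : ContDiff ℝ 2 τ)
    (hτ0 : ∀ y : ℝ, |τ y| ≤ a + b * |y| ^ γ)
    (hτ1 : ∀ y : ℝ, |deriv τ y| ≤ a + b * |y| ^ γ)
    (hτ2 : ∀ y : ℝ, |deriv (deriv τ) y| ≤ a + b * |y| ^ γ)
    (Γ : ℝ) (hΓ : Γ = Real.sqrt (σw ^ 2 * (∑ i, (x i) ^ 2) + σb ^ 2))
    (σ2 : ℝ) (hσ2 : σ2 = σw ^ 2 * (∫ z, (τ (Γ * z)) ^ 2 ∂gaussianReal 0 1) + σb ^ 2)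
    (n : ℕ) (hn : 1 ≤ n) :
    dTV
      (Measure.map
        (fun ω : (Fin n → ℝ) × (Fin n → (Fin d → ℝ)) × (Fin n → ℝ) × ℝ =>
          (Real.sqrt n)⁻¹ * σw *
              (∑ j, ω.1 j * τ (σw * (∑ i, ω.2.1 j i * x i) + σb * ω.2.2.1 j))
            + σb * ω.2.2.2)
        ((Measure.pi fun _ : Fin n => gaussianReal 0 1).prod
          ((Measure.pi fun _ : Fin n => Measure.pi fun _ : Fin d => gaussianReal 0 1).prod
            ((Measure.pi fun _ : Fin n => gaussianReal 0 1).prod (gaussianReal 0 1)))))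
      (gaussianReal 0 σ2.toNNReal)
      ≤ (Real.sqrt n)⁻¹
        * (4 / σ2)
        * σw ^ 2
        * Real.sqrt (Γ ^ 2 + Γ ^ 4 * (2 + Real.sqrt (3 * (1 + 2 * Γ ^ 2 + 3 * Γ ^ 4))))
        * ((∫ z, (a + b * |Γ * z| ^ γ) ^ 4 ∂gaussianReal 0 1) ^ ((1:ℝ)/4)) ^ 2 := by
  have hΓ_nonneg : 0 ≤ Γ := hΓ ▸ Real.sqrt_nonneg _
  have hσ2_pos : 0 < σ2 := by
    rw [hσ2]
    positivity
  have hΓ_le : Γ ≤ √(Γ ^ 2 + Γ ^ 4 * (2 + √(3 * (1 + 2 * Γ ^ 2 + 3 * Γ ^ 4)))) :=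
    Real.le_sqrt_of_sq_le (le_add_of_nonneg_right (by positivity))
  refine (gaussian_nn_tv_bound_general x σw σb (hτ.of_le one_le_two)
    (memLp_const_add_const_mul_abs_rpow_gaussianReal a b hγ 0 _ 4) hτ0 hτ1 hΓ hσ2 hσ2_pos
    (Nat.one_le_iff_ne_zero.1 hn)).trans ?_
  gcongr
  exact Real.pi_le_four
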